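/- Let 2 < q < ∞. A linear operator T : ℝ² → ℝ² with operator norm ‖T‖ = 1 from ℓ²_2 to ℓ^q_2 is an extreme point of the closed unit ball of L(ℓ²_2, ℓ^q_2) if and only if either (a) T attains its norm on two linearly independent vectors, or (b) there exist a Euclidean unit vector x, a vector y = (y1,y2) with |y1|^q = |y2|^q = 1/2, and s = ±2^{(q−2)/q}/√(q−1), such that T = x⊗y + s·x^o⊗(y^o)^{q−1}. -/

import Mathlib

/-!
Fix a unit vector `x` at which a contraction `T` attains its norm, and put `y = T x`, so
`|y₁|^q + |y₂|^q = 1`. Comparing the expansions at `t = 0` of `|T (x + t x^o)|^q` and of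
`(1 + t²)^{q/2}`, which bounds it (`contraction_struct`):

* order one forces `T x^o = α v` with `v = (y^o)^{q-1}`, as `v` spans the tangent at `y` to the
  unit sphere of `ℓ^q`;
* order two gives `(q - 1) α² |y₁ y₂|^{q-2} ≤ 1`;
* if this is an equality, order three has to vanish too (its coefficient on the right is `0`), and
  that forces `|y₁| = |y₂|`.

For the perturbation argument, suppose `T` attains its norm only at multiples of `x`. If the
second-order inequality is strict, then `x ⊗ y + s x^o ⊗ v` is a contraction for all `s` near `α`
(`exists_perturbation`): near `±x` the second-order term decides, and elsewhere on the compact unit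
circle `T` is strictly contracting. So `T` is the midpoint of two contractions and is not extreme.
If it is an equality, then `|y₁| = |y₂|`, and `T` has the explicit form of the theorem.

Conversely, by strict convexity of `|·|^q`, if `T` is an average of contractions `A` and `B` then
these agree with `T` at each vector where `T` attains its norm (`attained_of_segment`). Two
independent such vectors determine `T`. For the explicit form, one vector `x` is available;
`A x^o` and `B x^o` are multiples of `v` with coefficients of modulus at most `|s|` by the
second-order inequality, and they average to `s`, hence both equal `s`.
-/

noncomputable section

/-- The ℓ^r norm on ℝ². -/
def pnorm (r : ℝ) (z : ℝ × ℝ) : ℝ := (|z.1| ^ r + |z.2| ^ r) ^ (1 / r)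

/-- Apply a 2×2 real matrix, viewed as a linear operator ℝ² → ℝ², to a vector. -/
def app (A : Matrix (Fin 2) (Fin 2) ℝ) (z : ℝ × ℝ) : ℝ × ℝ :=
  (A 0 0 * z.1 + A 0 1 * z.2, A 1 0 * z.1 + A 1 1 * z.2)

/-- Operator norm from ℓ^p_2 to ℓ^q_2. -/
def opNorm (p q : ℝ) (A : Matrix (Fin 2) (Fin 2) ℝ) : ℝ :=
  sSup {c : ℝ | ∃ z : ℝ × ℝ, pnorm p z = 1 ∧ c = pnorm q (app A z)}

/-- Closed unit ball of L(ℓ^p_2, ℓ^q_2). -/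
def unitBall (p q : ℝ) : Set (Matrix (Fin 2) (Fin 2) ℝ) := {A | opNorm p q A ≤ 1}

/-- The rank-one operator u ⊗ v : z ↦ (u·z)·v. -/
def tensor (u v : ℝ × ℝ) : Matrix (Fin 2) (Fin 2) ℝ :=
  !![v.1 * u.1, v.1 * u.2; v.2 * u.1, v.2 * u.2]

/-- Signed power of a vector: (sgn z1 |z1|^r, sgn z2 |z2|^r). -/
def spow (z : ℝ × ℝ) (r : ℝ) : ℝ × ℝ :=
  (Real.sign z.1 * |z.1| ^ r, Real.sign z.2 * |z.2| ^ r)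

/-- Rotation: z^o = (−z2, z1). -/
def rot (z : ℝ × ℝ) : ℝ × ℝ := (-z.2, z.1)


open Filter Topology

/-! ### One-sided sign from the first nonvanishing derivative -/


lemma neg_right_of_deriv_neg {f : ℝ → ℝ} {c : ℝ} (h : HasDerivAt f c 0) (h0 : f 0 = 0)
    (hc : c < 0) : ∀ᶠ t in 𝓝[>] (0 : ℝ), f t < 0 := by
  have h1 := (hasDerivAt_iff_tendsto_slope.1 h).mono_left
    (nhdsWithin_mono 0 (fun t (ht : 0 < t) => ht.ne'))
  filter_upwards [h1.eventually (gt_mem_nhds hc), self_mem_nhdsWithin] with t ht ht0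
  have ht0 : (0 : ℝ) < t := ht0
  rw [slope_def_field, h0, sub_zero, sub_zero] at ht
  by_contra hn
  exact absurd ht (not_lt.2 (div_nonneg (not_lt.1 hn) ht0.le))

lemma neg_right_of_eventually {f f' : ℝ → ℝ} (h : ∀ t, HasDerivAt f (f' t) t) (h0 : f 0 = 0)
    (hc : ∀ᶠ t in 𝓝[>] (0 : ℝ), f' t < 0) : ∀ᶠ t in 𝓝[>] (0 : ℝ), f t < 0 := by
  obtain ⟨e, he, hs⟩ := mem_nhdsGT_iff_exists_Ioo_subset.1 hc
  have he : (0 : ℝ) < e := he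
  filter_upwards [Ioo_mem_nhdsGT he] with t ht
  obtain ⟨s, hs1, hs2⟩ := exists_hasDerivAt_eq_slope f f' ht.1
    (fun x _ => (h x).continuousAt.continuousWithinAt) (fun x _ => h x)
  have h3 : f' s < 0 := hs ⟨hs1.1, hs1.2.trans ht.2⟩
  rw [hs2, h0, sub_zero, sub_zero] at h3
  by_contra hn
  exact absurd h3 (not_lt.2 (div_nonneg (not_lt.1 hn) ht.1.le))

/-! ### Derivatives of `|y + t w|^q` and `exp (k t² / 2)` -/

/-- Any real exponent is allowed, unlike in `hasDerivAt_abs_rpow`, at the price of `x ≠ 0`. -/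
lemma hasDerivAt_abs_rpow_of_ne {x : ℝ} (hx : x ≠ 0) (p : ℝ) :
    HasDerivAt (fun x : ℝ => |x| ^ p) (p * |x| ^ (p - 2) * x) x := by
  have h := (hasDerivAt_abs hx).rpow_const (p := p) (Or.inl (abs_ne_zero.2 hx))
  refine h.congr_deriv ?_
  have h1 : |x| ^ (p - 1) = |x| ^ (p - 2) * |x| := by
    rw [← Real.rpow_add_one (abs_ne_zero.2 hx)]; ring_nf
  rw [h1]
  linear_combination (p * |x| ^ (p - 2)) * (sign_mul_abs x)

lemma hasDerivAt_abs_rpow_mul (x : ℝ) {p : ℝ} (hp : 0 < p) :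
    HasDerivAt (fun x : ℝ => |x| ^ p * x) ((p + 1) * |x| ^ p) x := by
  rcases eq_or_ne x 0 with rfl | hx
  · rw [hasDerivAt_iff_tendsto_slope]
    have h : Tendsto (fun t : ℝ => |t| ^ p) (𝓝[≠] 0) (𝓝 ((p + 1) * |(0:ℝ)| ^ p)) := by
      have : ContinuousAt (fun t : ℝ => |t| ^ p) 0 :=
        (continuous_abs.continuousAt).rpow_const (Or.inr hp.le)
      have h2 := this.tendsto
      simp only [abs_zero, Real.zero_rpow hp.ne', mul_zero] at h2 ⊢
      exact h2.mono_left nhdsWithin_le_nhds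
    refine h.congr' ?_
    filter_upwards [self_mem_nhdsWithin] with t ht
    have ht : t ≠ 0 := ht
    rw [slope_def_field]; field_simp; ring
  · have h := (hasDerivAt_abs_rpow_of_ne hx p).mul (hasDerivAt_id x)
    refine h.congr_deriv ?_
    have h1 : |x| ^ p = |x| ^ (p - 2) * |x| ^ 2 := by
      rw [← Real.rpow_natCast, ← Real.rpow_add (abs_pos.2 hx)]; norm_num
    rw [sq_abs] at h1
    simp only [id]
    linear_combination (-p) * h1

lemma hasDerivAt_G0 {q : ℝ} (hq : 2 < q) (y w t : ℝ) :
    HasDerivAt (fun t : ℝ => |y + t * w| ^ q) (q * (|y + t * w| ^ (q - 2) * (y + t * w)) * w) t := by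
  have h := (hasDerivAt_abs_rpow (y + t * w) (by linarith : 1 < q)).comp t
    (((hasDerivAt_id t).mul_const w).const_add y)
  refine h.congr_deriv ?_
  ring

lemma hasDerivAt_G1 {q : ℝ} (hq : 2 < q) (y w t : ℝ) :
    HasDerivAt (fun t : ℝ => q * (|y + t * w| ^ (q - 2) * (y + t * w)) * w)
      (q * (q - 1) * |y + t * w| ^ (q - 2) * w ^ 2) t := by
  have h := (((hasDerivAt_abs_rpow_mul (y + t * w) (by linarith : 0 < q - 2)).comp t
    (((hasDerivAt_id t).mul_const w).const_add y)).const_mul q).mul_const w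
  refine h.congr_deriv ?_
  ring

lemma hasDerivAt_G2 {q : ℝ} {y : ℝ} (w : ℝ) (hy : y ≠ 0) :
    HasDerivAt (fun t : ℝ => q * (q - 1) * |y + t * w| ^ (q - 2) * w ^ 2)
      (q * (q - 1) * (q - 2) * (|y| ^ (q - 4) * y * w ^ 3)) 0 := by
  have h0 : y + 0 * w ≠ 0 := by simpa using hy
  have h := (((hasDerivAt_abs_rpow_of_ne h0 (q - 2)).comp 0
    (((hasDerivAt_id (0:ℝ)).mul_const w).const_add y)).const_mul (q * (q - 1))).mul_const (w ^ 2)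
  refine h.congr_deriv ?_
  simp only [show q - 2 - 2 = q - 4 by ring]; simp; ring

lemma hasDerivAt_E0 (k t : ℝ) : HasDerivAt (fun t : ℝ => Real.exp (k * t ^ 2 / 2))
    (k * t * Real.exp (k * t ^ 2 / 2)) t := by
  have h := ((((hasDerivAt_id t).pow 2).const_mul k).div_const 2).exp
  refine h.congr_deriv ?_
  simp; ring

lemma hasDerivAt_E1 (k t : ℝ) : HasDerivAt (fun t : ℝ => k * t * Real.exp (k * t ^ 2 / 2))
    ((k + k ^ 2 * t ^ 2) * Real.exp (k * t ^ 2 / 2)) t := by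
  have h := ((hasDerivAt_id t).const_mul k).mul (hasDerivAt_E0 k t)
  refine h.congr_deriv ?_
  simp; ring

lemma hasDerivAt_E2 (k : ℝ) :
    HasDerivAt (fun t : ℝ => (k + k ^ 2 * t ^ 2) * Real.exp (k * t ^ 2 / 2)) 0 0 := by
  have h := ((((hasDerivAt_id (0:ℝ)).pow 2).const_mul (k ^ 2)).const_add k).mul (hasDerivAt_E0 k 0)
  refine h.congr_deriv ?_
  simp

/-! ### Expansion along a line: necessary and sufficient conditions -/

/-- The first three Taylor coefficients of `exp (q t² / 2) - |y₁ + t w₁|^q - |y₂ + t w₂|^q`: if this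
is nonnegative and vanishes at `0`, its first nonvanishing coefficient is nonnegative. The
exponential, being a smooth upper bound of `(1 + t²)^{q/2}` with the same expansion to order three,
has simpler derivatives. -/
lemma nec_right {q : ℝ} (hq : 2 < q) {y₁ y₂ w₁ w₂ : ℝ} (hy : |y₁| ^ q + |y₂| ^ q = 1)
    (h : ∀ t : ℝ, |y₁ + t * w₁| ^ q + |y₂ + t * w₂| ^ q ≤ Real.exp (q * t ^ 2 / 2)) :
    (|y₁| ^ (q - 2) * y₁ * w₁ + |y₂| ^ (q - 2) * y₂ * w₂ ≤ 0) ∧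
    (|y₁| ^ (q - 2) * y₁ * w₁ + |y₂| ^ (q - 2) * y₂ * w₂ = 0 →
      (q - 1) * (|y₁| ^ (q - 2) * w₁ ^ 2 + |y₂| ^ (q - 2) * w₂ ^ 2) ≤ 1 ∧
      ((q - 1) * (|y₁| ^ (q - 2) * w₁ ^ 2 + |y₂| ^ (q - 2) * w₂ ^ 2) = 1 → y₁ ≠ 0 → y₂ ≠ 0 →
        |y₁| ^ (q - 4) * y₁ * w₁ ^ 3 + |y₂| ^ (q - 4) * y₂ * w₂ ^ 3 ≤ 0)) := by
  have d0 := fun t => (hasDerivAt_E0 q t).sub ((hasDerivAt_G0 hq y₁ w₁ t).add (hasDerivAt_G0 hq y₂ w₂ t))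
  have d1 := fun t => (hasDerivAt_E1 q t).sub ((hasDerivAt_G1 hq y₁ w₁ t).add (hasDerivAt_G1 hq y₂ w₂ t))
  have key : ¬ ∀ᶠ t in 𝓝[>] (0 : ℝ),
      Real.exp (q * t ^ 2 / 2) - (|y₁ + t * w₁| ^ q + |y₂ + t * w₂| ^ q) < 0 := by
    intro hh
    obtain ⟨t, ht⟩ := hh.exists
    linarith [h t]
  have z0 : Real.exp (q * 0 ^ 2 / 2) - (|y₁ + 0 * w₁| ^ q + |y₂ + 0 * w₂| ^ q) = 0 := by
    simp [hy]
  refine ⟨?_, fun h1 => ⟨?_, fun h2 hy1 hy2 => ?_⟩⟩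
  · by_contra! hc
    refine key (neg_right_of_deriv_neg (d0 0) z0 ?_)
    simp only [zero_mul, add_zero, mul_zero]
    nlinarith
  · by_contra! hc
    refine key (neg_right_of_eventually d0 z0 (neg_right_of_deriv_neg (d1 0) ?_ ?_))
    · simp only [zero_mul, add_zero, mul_zero]
      linear_combination (-q) * h1
    · simp
      nlinarith
  · by_contra! hc
    have d2 := (hasDerivAt_E2 q).sub ((hasDerivAt_G2 (q := q) w₁ hy1).add (hasDerivAt_G2 (q := q) w₂ hy2))
    refine key (neg_right_of_eventually d0 z0 (neg_right_of_eventually d1 ?_ 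
      (neg_right_of_deriv_neg d2 ?_ ?_)))
    · simp only [zero_mul, add_zero, mul_zero]
      linear_combination (-q) * h1
    · simp
      linear_combination (-q) * h2
    · have : 0 < q * (q - 1) * (q - 2) := by
        have : 0 < q - 1 := by linarith
        have : 0 < q - 2 := by linarith
        positivity
      nlinarith

lemma suff_right {q : ℝ} (hq : 2 < q) {y₁ y₂ v₁ v₂ c : ℝ} (hy : |y₁| ^ q + |y₂| ^ q = 1)
    (h1 : |y₁| ^ (q - 2) * y₁ * v₁ + |y₂| ^ (q - 2) * y₂ * v₂ = 0)
    (h2 : (q - 1) * (|y₁| ^ (q - 2) * v₁ ^ 2 + |y₂| ^ (q - 2) * v₂ ^ 2) < c) :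
    ∀ᶠ u in 𝓝[>] (0 : ℝ), |y₁ + u * v₁| ^ q + |y₂ + u * v₂| ^ q ≤ 1 + q / 2 * (c * u ^ 2) := by
  have d0 : ∀ t, HasDerivAt (fun t : ℝ => 1 + q / 2 * (c * t ^ 2)) (q * c * t) t := fun t => by
    have h := ((((hasDerivAt_id t).pow 2).const_mul c).const_mul (q / 2)).const_add 1
    refine h.congr_deriv ?_
    simp; ring
  have d1 : ∀ t, HasDerivAt (fun t : ℝ => q * c * t) (q * c) t := fun t => by
    simpa using (hasDerivAt_id t).const_mul (q * c)
  have d0' := fun t => ((hasDerivAt_G0 hq y₁ v₁ t).add (hasDerivAt_G0 hq y₂ v₂ t)).sub (d0 t)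
  have d1' := fun t => ((hasDerivAt_G1 hq y₁ v₁ t).add (hasDerivAt_G1 hq y₂ v₂ t)).sub (d1 t)
  have := neg_right_of_eventually d0' (by simp [hy]) (neg_right_of_deriv_neg (d1' 0) ?_ ?_)
  · filter_upwards [this] with t ht
    simp only [Pi.sub_apply, Pi.add_apply] at ht
    linarith
  · simp
    linear_combination (q) * h1
  · simp
    nlinarith

/-- Two-sided version of `suff_right`, which is applied both to `v` and to `-v`. -/
lemma suff_two {q : ℝ} (hq : 2 < q) {y₁ y₂ v₁ v₂ c : ℝ} (hy : |y₁| ^ q + |y₂| ^ q = 1)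
    (h1 : |y₁| ^ (q - 2) * y₁ * v₁ + |y₂| ^ (q - 2) * y₂ * v₂ = 0)
    (h2 : (q - 1) * (|y₁| ^ (q - 2) * v₁ ^ 2 + |y₂| ^ (q - 2) * v₂ ^ 2) < c) :
    ∀ᶠ u in 𝓝 (0 : ℝ), |y₁ + u * v₁| ^ q + |y₂ + u * v₂| ^ q ≤ 1 + q / 2 * (c * u ^ 2) := by
  have hr := suff_right hq hy h1 h2
  have hl := suff_right hq (v₁ := -v₁) (v₂ := -v₂) (c := c) hy (by linarith) (by simpa using h2)
  obtain ⟨e, he, hs⟩ := mem_nhdsGT_iff_exists_Ioo_subset.1 hr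
  obtain ⟨e', he', hs'⟩ := mem_nhdsGT_iff_exists_Ioo_subset.1 hl
  have he : (0 : ℝ) < e := he
  have he' : (0 : ℝ) < e' := he'
  filter_upwards [Ioo_mem_nhds (neg_lt_zero.2 he') he] with u hu
  rcases lt_trichotomy u 0 with h | rfl | h
  · have := hs' (show -u ∈ Set.Ioo 0 e' from ⟨by linarith, by linarith [hu.1]⟩)
    simpa using this
  · simp [hy]
  · exact hs ⟨h, hu.2⟩

/-! ### Strict convexity of `|·|^q` -/

lemma abs_rpow_strict {q : ℝ} (hq : 2 < q) {x y a b : ℝ} (hxy : x ≠ y) (ha : 0 < a) (hb : 0 < b)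
    (hab : a + b = 1) : |a * x + b * y| ^ q < a * |x| ^ q + b * |y| ^ q := by
  have hle : |a * x + b * y| ≤ a * |x| + b * |y| := by
    simpa [abs_mul, abs_of_pos ha, abs_of_pos hb] using abs_add_le (a * x) (b * y)
  have h1 : |a * x + b * y| ^ q ≤ (a * |x| + b * |y|) ^ q :=
    Real.rpow_le_rpow (abs_nonneg _) hle (by linarith)
  rcases eq_or_ne |x| |y| with h | h
  · rcases abs_eq_abs.1 h with h' | h'
    · exact absurd h' hxy
    · have hy : y ≠ 0 := by rintro rfl; simp at h'; exact hxy h'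
      have h2 : |a * x + b * y| < |y| := by
        rw [h', show a * -y + b * y = (b - a) * y by ring, abs_mul]
        have : |b - a| < 1 := by rw [abs_lt]; constructor <;> linarith
        have := abs_pos.2 hy
        nlinarith
      have h3 := Real.rpow_lt_rpow (abs_nonneg _) h2 (by linarith : 0 < q)
      rw [h, ← add_mul, hab, one_mul]; exact h3
  · have := (strictConvexOn_rpow (by linarith : 1 < q)).2 (abs_nonneg x) (abs_nonneg y) h ha hb hab
    simp only [smul_eq_mul] at this
    exact h1.trans_lt this

lemma abs_rpow_convex {q : ℝ} (hq : 2 < q) {x y a b : ℝ} (ha : 0 < a) (hb : 0 < b)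
    (hab : a + b = 1) : |a * x + b * y| ^ q ≤ a * |x| ^ q + b * |y| ^ q := by
  rcases eq_or_ne x y with rfl | h
  · rw [← add_mul, ← add_mul, hab, one_mul, one_mul]
  · exact (abs_rpow_strict hq h ha hb hab).le

lemma abs_rpow_sub_two_mul_sq {q : ℝ} (hq : 2 < q) (y : ℝ) : |y| ^ (q - 2) * y ^ 2 = |y| ^ q := by
  rcases eq_or_ne y 0 with rfl | hy
  · simp [Real.zero_rpow (by linarith : q ≠ 0)]
  · rw [← sq_abs, ← Real.rpow_natCast, ← Real.rpow_add (abs_pos.2 hy)]; norm_num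

/-! ### The tangent vector `(y^o)^{q-1}` -/

/-- The quadratic form giving the second-order term, evaluated at the tangent vector
`v = (-|y₂|^{q-2} y₂, |y₁|^{q-2} y₁)`. -/
lemma tangent_mul {q : ℝ} (hq : 2 < q) {y₁ y₂ : ℝ} (hy : |y₁| ^ q + |y₂| ^ q = 1) :
    |y₁| ^ (q - 2) * (|y₂| ^ (q - 2) * y₂) ^ 2 + |y₂| ^ (q - 2) * (|y₁| ^ (q - 2) * y₁) ^ 2
      = (|y₁| * |y₂|) ^ (q - 2) := by
  rw [Real.mul_rpow (abs_nonneg _) (abs_nonneg _)]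
  rw [← abs_rpow_sub_two_mul_sq hq, ← abs_rpow_sub_two_mul_sq hq] at hy
  linear_combination |y₁| ^ (q - 2) * |y₂| ^ (q - 2) * hy

/-- The conclusion of the expansion for `t ↦ y + t w`: the direction `w` is a multiple `α` of the
tangent vector at `y`, with a bound on `α` that is attained only when `|y₁|^q = |y₂|^q = 1 / 2`. -/
lemma nec_main {q : ℝ} (hq : 2 < q) {y₁ y₂ w₁ w₂ : ℝ} (hy : |y₁| ^ q + |y₂| ^ q = 1)
    (h : ∀ t : ℝ, |y₁ + t * w₁| ^ q + |y₂ + t * w₂| ^ q ≤ Real.exp (q * t ^ 2 / 2)) :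
    ∃ α : ℝ, w₁ = α * -(|y₂| ^ (q - 2) * y₂) ∧ w₂ = α * (|y₁| ^ (q - 2) * y₁) ∧
      (q - 1) * (α ^ 2 * (|y₁| * |y₂|) ^ (q - 2)) ≤ 1 ∧
      ((q - 1) * (α ^ 2 * (|y₁| * |y₂|) ^ (q - 2)) = 1 → |y₁| ^ q = 1 / 2 ∧ |y₂| ^ q = 1 / 2) := by
  have hr := nec_right hq hy h
  have hl := nec_right hq (w₁ := -w₁) (w₂ := -w₂) hy (fun t => by
    have := h (-t)
    simpa using this)
  have h1 : |y₁| ^ (q - 2) * y₁ * w₁ + |y₂| ^ (q - 2) * y₂ * w₂ = 0 :=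
    le_antisymm hr.1 (by linarith [hl.1])
  have hr2 := hr.2 h1
  have hl2 := hl.2 (by linarith)
  have tm := tangent_mul hq hy
  have e1 := abs_rpow_sub_two_mul_sq hq y₁
  have e2 := abs_rpow_sub_two_mul_sq hq y₂
  -- `(a, b)` is the supporting functional at `y`, and `(-b, a)` the tangent vector.
  set a := |y₁| ^ (q - 2) * y₁ with ha
  set b := |y₂| ^ (q - 2) * y₂ with hb
  have hab : a ^ 2 + b ^ 2 ≠ 0 := by
    intro h0
    have ha0 : a = 0 := by nlinarith [sq_nonneg a, sq_nonneg b]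
    have hb0 : b = 0 := by nlinarith [sq_nonneg a, sq_nonneg b]
    have : a * y₁ + b * y₂ = 1 := by rw [← hy, ← e1, ← e2]; ring
    simp [ha0, hb0] at this
  obtain ⟨α, h1', h2'⟩ : ∃ α : ℝ, w₁ = α * -b ∧ w₂ = α * a := by
    refine ⟨(w₂ * a - w₁ * b) / (a ^ 2 + b ^ 2), ?_, ?_⟩
    · field_simp; linear_combination a * h1
    · field_simp; linear_combination b * h1
  have hM : |y₁| ^ (q - 2) * w₁ ^ 2 + |y₂| ^ (q - 2) * w₂ ^ 2
      = α ^ 2 * (|y₁| * |y₂|) ^ (q - 2) := by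
    rw [h1', h2', ← tm]; ring
  refine ⟨α, h1', h2', hM ▸ hr2.1, fun heq => ?_⟩
  have hα : α ≠ 0 := by rintro rfl; simp at heq
  have hne : ¬ (|y₁| * |y₂| = 0) := by
    intro h0; rw [h0, Real.zero_rpow (by linarith)] at heq; simp at heq
  have hy1 : y₁ ≠ 0 := by rintro rfl; simp at hne
  have hy2 : y₂ ≠ 0 := by rintro rfl; simp at hne
  have h3 := hr2.2 (hM ▸ heq) hy1 hy2
  have h3' := hl2.2 (by simpa using (hM ▸ heq)) hy1 hy2
  have f1 : |y₁| ^ (q - 2) = |y₁| ^ (q - 4) * y₁ ^ 2 := by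
    rw [← sq_abs, ← Real.rpow_natCast, ← Real.rpow_add (abs_pos.2 hy1)]; congr 1; push_cast; ring
  have f2 : |y₂| ^ (q - 2) = |y₂| ^ (q - 4) * y₂ ^ 2 := by
    rw [← sq_abs, ← Real.rpow_natCast, ← Real.rpow_add (abs_pos.2 hy2)]; congr 1; push_cast; ring
  have hA := Real.rpow_pos_of_pos (abs_pos.2 hy1) (q - 4)
  have hB := Real.rpow_pos_of_pos (abs_pos.2 hy2) (q - 4)
  rw [f1] at ha e1
  rw [f2] at hb e2
  rw [h1', h2', ha, hb] at h3 h3'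
  set A := |y₁| ^ (q - 4)
  set B := |y₂| ^ (q - 4)
  -- The third-order coefficient has both signs, since `w` may be replaced by `-w`.
  have h4 : (α ^ 3 * A * B * y₁ * y₂) * ((A * y₁ ^ 4) ^ 2 - (B * y₂ ^ 4) ^ 2) = 0 := by
    refine le_antisymm ?_ ?_
    · refine le_trans (le_of_eq ?_) h3; ring
    · refine neg_nonpos.1 (le_trans (le_of_eq ?_) h3'); ring
  have h5 : (A * y₁ ^ 4) ^ 2 - (B * y₂ ^ 4) ^ 2 = 0 := by
    refine (mul_eq_zero.1 h4).resolve_left ?_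
    have := hA.ne'
    have := hB.ne'
    positivity
  have h6 : A * y₁ ^ 4 = B * y₂ ^ 4 :=
    (sq_eq_sq₀ (by positivity) (by positivity)).1 (by linarith)
  have h7 : |y₁| ^ q = |y₂| ^ q := by rw [← e1, ← e2]; linear_combination h6
  constructor <;> linarith

/-- Strict second-order inequality at `α`: a bound in `t = p.2` near `0` that is uniform in the
coefficient `s = p.1` near `α`. Uniformity comes for free since the left side depends only on
`s * t`. -/
lemma suff_main {q : ℝ} (hq : 2 < q) {y₁ y₂ α : ℝ} (hy : |y₁| ^ q + |y₂| ^ q = 1)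
    (hα : (q - 1) * (α ^ 2 * (|y₁| * |y₂|) ^ (q - 2)) < 1) :
    ∀ᶠ p : ℝ × ℝ in 𝓝 (α, 0),
      |y₁ + p.1 * p.2 * -(|y₂| ^ (q - 2) * y₂)| ^ q + |y₂ + p.1 * p.2 * (|y₁| ^ (q - 2) * y₁)| ^ q
        ≤ (1 + p.2 ^ 2) ^ (q / 2) := by
  have tm := tangent_mul hq hy
  set M := (|y₁| * |y₂|) ^ (q - 2)
  obtain ⟨c, hc1, hc2⟩ : ∃ c, (q - 1) * M < c ∧ c * α ^ 2 < 1 := by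
    rcases eq_or_ne α 0 with rfl | h
    · exact ⟨(q - 1) * M + 1, by linarith, by simp⟩
    · have hp : 0 < α ^ 2 := by positivity
      have : (q - 1) * M < 1 / α ^ 2 := by rw [lt_div_iff₀ hp]; linarith
      obtain ⟨c, h1, h2⟩ := exists_between this
      exact ⟨c, h1, by rwa [lt_div_iff₀ hp] at h2⟩
  have h0 := suff_two hq (v₁ := -(|y₂| ^ (q - 2) * y₂)) (v₂ := |y₁| ^ (q - 2) * y₁) (c := c) hy
    (by ring) (by rw [neg_sq, tm]; exact hc1)
  have t1 : Tendsto (fun p : ℝ × ℝ => p.1 * p.2) (𝓝 (α, 0)) (𝓝 0) := by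
    have : ContinuousAt (fun p : ℝ × ℝ => p.1 * p.2) (α, 0) := by fun_prop
    simpa using this.tendsto
  have t2 : Tendsto (fun p : ℝ × ℝ => c * p.1 ^ 2) (𝓝 (α, 0)) (𝓝 (c * α ^ 2)) := by
    have : ContinuousAt (fun p : ℝ × ℝ => c * p.1 ^ 2) (α, 0) := by fun_prop
    simpa using this.tendsto
  filter_upwards [t1.eventually h0, t2.eventually (gt_mem_nhds hc2)] with p hp1 hp2
  refine hp1.trans (le_trans ?_ (one_add_mul_self_le_rpow_one_add (s := p.2 ^ 2)
    (by nlinarith) (by linarith : 1 ≤ q / 2)))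
  have : c * (p.1 * p.2) ^ 2 ≤ p.2 ^ 2 := by nlinarith [sq_nonneg p.2]
  nlinarith

/-! ### The norms and the unit ball in coordinates -/

lemma rpow_eq_one_iff_of_pos {x p : ℝ} (hx : 0 ≤ x) (hp : 0 < p) : x ^ p = 1 ↔ x = 1 := by
  have h := Real.rpow_left_inj hx zero_le_one hp.ne'
  rwa [Real.one_rpow] at h

lemma pnorm_two_eq_one (z : ℝ × ℝ) : pnorm 2 z = 1 ↔ z.1 ^ 2 + z.2 ^ 2 = 1 := by
  unfold pnorm
  have h : (0 : ℝ) ≤ |z.1| ^ (2 : ℝ) + |z.2| ^ (2 : ℝ) := by positivity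
  rw [rpow_eq_one_iff_of_pos h (by norm_num)]
  norm_cast
  rw [sq_abs, sq_abs]

lemma pnorm_eq_one {q : ℝ} (hq : 2 < q) (z : ℝ × ℝ) :
    pnorm q z = 1 ↔ |z.1| ^ q + |z.2| ^ q = 1 := by
  unfold pnorm
  exact rpow_eq_one_iff_of_pos (by positivity) (by positivity)

lemma pnorm_le_one {q : ℝ} (hq : 2 < q) (z : ℝ × ℝ) :
    pnorm q z ≤ 1 ↔ |z.1| ^ q + |z.2| ^ q ≤ 1 := by
  unfold pnorm
  have h := Real.rpow_le_rpow_iff (x := |z.1| ^ q + |z.2| ^ q) (y := 1) (z := 1 / q)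
    (by positivity) zero_le_one (by positivity)
  rwa [Real.one_rpow] at h

lemma continuous_pnorm {q : ℝ} (hq : 0 < q) : Continuous (pnorm q) := by
  unfold pnorm
  have h1 : ∀ z : ℝ × ℝ, |z.1| ^ q + |z.2| ^ q ≠ 0 ∨ 0 ≤ 1 / q := fun _ => Or.inr (by positivity)
  exact ((continuous_fst.abs.rpow_const fun _ => Or.inr hq.le).add
    (continuous_snd.abs.rpow_const fun _ => Or.inr hq.le)).rpow_const fun _ => Or.inr (by positivity)

lemma continuous_app (A : Matrix (Fin 2) (Fin 2) ℝ) : Continuous (app A) := by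
  unfold app; fun_prop

lemma isCompact_circle : IsCompact {z : ℝ × ℝ | z.1 ^ 2 + z.2 ^ 2 = 1} := by
  refine (isCompact_Icc (a := ((-1, -1) : ℝ × ℝ)) (b := (1, 1))).of_isClosed_subset
    (isClosed_eq (by fun_prop) (by fun_prop)) ?_
  rintro ⟨a, b⟩ h
  simp only [Set.mem_ofPred_eq] at h
  refine ⟨⟨?_, ?_⟩, ⟨?_, ?_⟩⟩ <;> simp only <;> nlinarith [sq_nonneg a, sq_nonneg b]

/-- The set whose supremum defines `opNorm` is the image of the unit circle, so it is compact and its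
supremum is a genuine maximum. -/
lemma opNorm_set (q : ℝ) (A : Matrix (Fin 2) (Fin 2) ℝ) :
    {c : ℝ | ∃ z : ℝ × ℝ, pnorm 2 z = 1 ∧ c = pnorm q (app A z)}
      = (fun z => pnorm q (app A z)) '' {z : ℝ × ℝ | z.1 ^ 2 + z.2 ^ 2 = 1} := by
  ext c
  simp only [pnorm_two_eq_one, Set.mem_ofPred_eq, Set.mem_image]
  exact exists_congr fun z => and_congr_right fun _ => eq_comm

lemma isCompact_opNorm_set {q : ℝ} (hq : 2 < q) (A : Matrix (Fin 2) (Fin 2) ℝ) :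
    IsCompact ((fun z => pnorm q (app A z)) '' {z : ℝ × ℝ | z.1 ^ 2 + z.2 ^ 2 = 1}) :=
  isCompact_circle.image ((continuous_pnorm (by linarith)).comp (continuous_app A))

lemma mem_unitBall {q : ℝ} (hq : 2 < q) (A : Matrix (Fin 2) (Fin 2) ℝ) :
    A ∈ unitBall 2 q ↔ ∀ z : ℝ × ℝ, z.1 ^ 2 + z.2 ^ 2 = 1 →
      |(app A z).1| ^ q + |(app A z).2| ^ q ≤ 1 := by
  simp only [unitBall, Set.mem_ofPred_eq, opNorm, opNorm_set, ← pnorm_le_one hq]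
  rw [csSup_le_iff (isCompact_opNorm_set hq A).bddAbove (Set.Nonempty.image _ ⟨(1, 0), by simp⟩)]
  exact Set.forall_mem_image

lemma exists_attains {q : ℝ} (hq : 2 < q) {A : Matrix (Fin 2) (Fin 2) ℝ} (h : opNorm 2 q A = 1) :
    ∃ x : ℝ × ℝ, x.1 ^ 2 + x.2 ^ 2 = 1 ∧ |(app A x).1| ^ q + |(app A x).2| ^ q = 1 := by
  rw [opNorm, opNorm_set] at h
  have := (isCompact_opNorm_set hq A).sSup_mem (Set.Nonempty.image _ ⟨(1, 0), by simp⟩)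
  rw [h] at this
  obtain ⟨x, hx, hx1⟩ := this
  exact ⟨x, hx, (pnorm_eq_one hq _).1 hx1⟩

lemma pnorm_two_eq (z : ℝ × ℝ) : pnorm 2 z = (z.1 ^ 2 + z.2 ^ 2) ^ ((1 : ℝ) / 2) := by
  unfold pnorm
  norm_cast
  rw [sq_abs, sq_abs]

lemma pnorm_eq_iff {q : ℝ} (hq : 2 < q) (u z : ℝ × ℝ) :
    pnorm q u = pnorm 2 z ↔ |u.1| ^ q + |u.2| ^ q = (z.1 ^ 2 + z.2 ^ 2) ^ (q / 2) := by
  have hq0 : q ≠ 0 := by linarith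
  have hz : (0 : ℝ) ≤ z.1 ^ 2 + z.2 ^ 2 := by positivity
  have hu : (0 : ℝ) ≤ |u.1| ^ q + |u.2| ^ q := by positivity
  rw [pnorm_two_eq, pnorm]
  constructor
  · intro h
    have := congrArg (· ^ q) h
    simp only [← Real.rpow_mul hz, ← Real.rpow_mul hu] at this
    rw [one_div_mul_cancel hq0, Real.rpow_one] at this
    rw [this]; ring_nf
  · intro h
    rw [h, ← Real.rpow_mul hz]
    congr 1; field_simp

lemma bound_of_mem {q : ℝ} (hq : 2 < q) {A : Matrix (Fin 2) (Fin 2) ℝ} (h : A ∈ unitBall 2 q)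
    (z : ℝ × ℝ) : |(app A z).1| ^ q + |(app A z).2| ^ q ≤ (z.1 ^ 2 + z.2 ^ 2) ^ (q / 2) := by
  rw [mem_unitBall hq] at h
  have hz : (0 : ℝ) ≤ z.1 ^ 2 + z.2 ^ 2 := by positivity
  rcases hz.eq_or_lt with h0 | h0
  · have h1 : z.1 = 0 := by nlinarith [sq_nonneg z.1, sq_nonneg z.2]
    have h2 : z.2 = 0 := by nlinarith [sq_nonneg z.1, sq_nonneg z.2]
    have : q ≠ 0 := by linarith
    simp [app, h1, h2, Real.zero_rpow this]
    positivity
  · set r := Real.sqrt (z.1 ^ 2 + z.2 ^ 2) with hr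
    have hr0 : 0 < r := Real.sqrt_pos.2 h0
    have hrs : r ^ 2 = z.1 ^ 2 + z.2 ^ 2 := Real.sq_sqrt hz
    have := h (z.1 / r, z.2 / r) (by simp only; field_simp; linarith)
    have e : ∀ a b : ℝ, a * (z.1 / r) + b * (z.2 / r) = (a * z.1 + b * z.2) / r := by
      intro a b; ring
    simp only [app, e, abs_div, abs_of_pos hr0] at this ⊢
    rw [Real.div_rpow (abs_nonneg _) hr0.le, Real.div_rpow (abs_nonneg _) hr0.le, ← add_div,
      div_le_one (by positivity)] at this
    refine this.trans (le_of_eq ?_)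
    rw [← hrs, ← Real.rpow_natCast, ← Real.rpow_mul hr0.le]
    congr 1; push_cast; ring

/-- Structure of a contraction `A` attaining its norm at the unit vector `x`: the image of `rot x` is
a multiple `α` of the tangent vector at `A x`, with `α` bounded by the second-order condition, and
equality there forces `|y₁|^q = |y₂|^q = 1 / 2` for `y = A x`. -/
lemma contraction_struct {q : ℝ} (hq : 2 < q) {A : Matrix (Fin 2) (Fin 2) ℝ}
    (h : A ∈ unitBall 2 q) {x : ℝ × ℝ} (hx : x.1 ^ 2 + x.2 ^ 2 = 1)
    (hy : |(app A x).1| ^ q + |(app A x).2| ^ q = 1) :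
    ∃ α : ℝ, (app A (rot x)).1 = α * -(|(app A x).2| ^ (q - 2) * (app A x).2) ∧
      (app A (rot x)).2 = α * (|(app A x).1| ^ (q - 2) * (app A x).1) ∧
      (q - 1) * (α ^ 2 * (|(app A x).1| * |(app A x).2|) ^ (q - 2)) ≤ 1 ∧
      ((q - 1) * (α ^ 2 * (|(app A x).1| * |(app A x).2|) ^ (q - 2)) = 1 →
        |(app A x).1| ^ q = 1 / 2 ∧ |(app A x).2| ^ q = 1 / 2) := by
  refine nec_main hq hy fun t => ?_
  have h1 := bound_of_mem hq h (x.1 + t * (rot x).1, x.2 + t * (rot x).2)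
  have e : ∀ a b : ℝ, a * (x.1 + t * (rot x).1) + b * (x.2 + t * (rot x).2)
      = (a * x.1 + b * x.2) + t * (a * (rot x).1 + b * (rot x).2) := by intros; ring
  have e2 : (x.1 + t * (rot x).1) ^ 2 + (x.2 + t * (rot x).2) ^ 2 = 1 + t ^ 2 := by
    simp only [rot]; linear_combination (1 + t ^ 2) * hx
  simp only [app, e, e2] at h1 ⊢
  refine h1.trans ?_
  calc (1 + t ^ 2) ^ (q / 2) ≤ (Real.exp (t ^ 2)) ^ (q / 2) :=
        Real.rpow_le_rpow (by positivity) (by linarith [Real.add_one_le_exp (t ^ 2)]) (by linarith)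
    _ = Real.exp (q * t ^ 2 / 2) := by rw [← Real.exp_mul]; congr 1; ring

/-! ### Matrices in the basis `x`, `rot x` -/

lemma matrix_ext_of_app {A B : Matrix (Fin 2) (Fin 2) ℝ} {z w : ℝ × ℝ}
    (hd : z.1 * w.2 - z.2 * w.1 ≠ 0) (hz : app A z = app B z) (hw : app A w = app B w) :
    A = B := by
  simp only [app, Prod.mk.injEq] at hz hw
  ext i j
  fin_cases i <;> fin_cases j <;> simp only [Fin.zero_eta, Fin.mk_one, Fin.isValue]
    <;> refine mul_left_cancel₀ hd ?_
  · linear_combination w.2 * hz.1 - z.2 * hw.1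
  · linear_combination z.1 * hw.1 - w.1 * hz.1
  · linear_combination w.2 * hz.2 - z.2 * hw.2
  · linear_combination z.1 * hw.2 - w.1 * hz.2

lemma det_rot {x : ℝ × ℝ} (hx : x.1 ^ 2 + x.2 ^ 2 = 1) :
    x.1 * (rot x).2 - x.2 * (rot x).1 ≠ 0 := by
  simp only [rot]
  intro h
  linarith

lemma app_form {x : ℝ × ℝ} (hx : x.1 ^ 2 + x.2 ^ 2 = 1) (y v : ℝ × ℝ) (s : ℝ) (a b : ℝ) :
    app (tensor x y + s • tensor (rot x) v) (a * x.1 + b * (rot x).1, a * x.2 + b * (rot x).2)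
      = (a * y.1 + s * b * v.1, a * y.2 + s * b * v.2) := by
  simp only [app, tensor, rot, Matrix.add_apply, Matrix.smul_apply, smul_eq_mul, Matrix.of_apply,
    Matrix.cons_val', Matrix.cons_val_zero, Matrix.cons_val_one, Matrix.cons_val_fin_one]
  ext <;> simp only
  · linear_combination (a * y.1 + s * b * v.1) * hx
  · linear_combination (a * y.2 + s * b * v.2) * hx

lemma app_form_x {x : ℝ × ℝ} (hx : x.1 ^ 2 + x.2 ^ 2 = 1) (y v : ℝ × ℝ) (s : ℝ) :
    app (tensor x y + s • tensor (rot x) v) x = y := by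
  simpa using app_form hx y v s 1 0

lemma app_form_rot {x : ℝ × ℝ} (hx : x.1 ^ 2 + x.2 ^ 2 = 1) (y v : ℝ × ℝ) (s : ℝ) :
    app (tensor x y + s • tensor (rot x) v) (rot x) = (s * v.1, s * v.2) := by
  simpa using app_form hx y v s 0 1

lemma spow_rot {q : ℝ} (hq : 2 < q) (y : ℝ × ℝ) :
    spow (rot y) (q - 1) = (-(|y.2| ^ (q - 2) * y.2), |y.1| ^ (q - 2) * y.1) := by
  have h : ∀ a : ℝ, Real.sign a * |a| ^ (q - 1) = |a| ^ (q - 2) * a := by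
    intro a
    rcases eq_or_ne a 0 with rfl | ha
    · simp
    · have : |a| ^ (q - 1) = |a| ^ (q - 2) * |a| := by
        rw [← Real.rpow_add_one (abs_ne_zero.2 ha)]; ring_nf
      rw [this]
      rcases lt_or_gt_of_ne ha with h | h
      · rw [Real.sign_of_neg h, abs_of_neg h]; ring
      · rw [Real.sign_of_pos h, abs_of_pos h]; ring
  have h2 := h (-y.2)
  rw [abs_neg] at h2
  simp only [spow, rot, h y.1, abs_neg, h2, mul_neg]

/-! ### Sufficient conditions for extremality -/

lemma attained_of_segment {q : ℝ} (hq : 2 < q) {T A B : Matrix (Fin 2) (Fin 2) ℝ} {a b : ℝ}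
    (ha : 0 < a) (hb : 0 < b) (hab : a + b = 1) (hT : a • A + b • B = T)
    (hA : A ∈ unitBall 2 q) (hB : B ∈ unitBall 2 q) {z : ℝ × ℝ}
    (hz : |(app T z).1| ^ q + |(app T z).2| ^ q = (z.1 ^ 2 + z.2 ^ 2) ^ (q / 2)) :
    app A z = app T z ∧ app B z = app T z := by
  have hA' := bound_of_mem hq hA z
  have hB' := bound_of_mem hq hB z
  have e1 : (app T z).1 = a * (app A z).1 + b * (app B z).1 := by
    rw [← hT]; simp [app]; ring
  have e2 : (app T z).2 = a * (app A z).2 + b * (app B z).2 := by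
    rw [← hT]; simp [app]; ring
  have c1 := abs_rpow_convex hq (x := (app A z).1) (y := (app B z).1) ha hb hab
  have c2 := abs_rpow_convex hq (x := (app A z).2) (y := (app B z).2) ha hb hab
  rw [← e1] at c1
  rw [← e2] at c2
  have hs : a * (|(app A z).1| ^ q + |(app A z).2| ^ q) + b * (|(app B z).1| ^ q + |(app B z).2| ^ q)
      ≤ (z.1 ^ 2 + z.2 ^ 2) ^ (q / 2) := by
    calc _ ≤ a * (z.1 ^ 2 + z.2 ^ 2) ^ (q / 2) + b * (z.1 ^ 2 + z.2 ^ 2) ^ (q / 2) := by gcongr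
      _ = _ := by rw [← add_mul, hab, one_mul]
  have h1 : (app A z).1 = (app B z).1 := by
    by_contra hne
    have := abs_rpow_strict hq hne ha hb hab
    rw [← e1] at this
    linarith
  have h2 : (app A z).2 = (app B z).2 := by
    by_contra hne
    have := abs_rpow_strict hq hne ha hb hab
    rw [← e2] at this
    linarith
  rw [← h1, ← add_mul, hab, one_mul] at e1
  rw [← h2, ← add_mul, hab, one_mul] at e2
  exact ⟨Prod.ext e1.symm e2.symm, Prod.ext (h1.symm.trans e1.symm) (h2.symm.trans e2.symm)⟩

lemma det_ne_zero_of_linearIndependent {z w : ℝ × ℝ} (h : LinearIndependent ℝ ![z, w]) :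
    z.1 * w.2 - z.2 * w.1 ≠ 0 := by
  intro h0
  rw [LinearIndependent.pair_iff] at h
  have h1 := h w.1 (-z.1) (by ext <;> simp <;> linarith)
  have h2 := h w.2 (-z.2) (by ext <;> simp <;> linarith)
  have h3 := h 1 0 (by
    ext <;> simp
    · linarith [h1.2]
    · linarith [h2.2])
  exact one_ne_zero h3.1

lemma linearIndependent_of_det_ne_zero {z w : ℝ × ℝ} (h : z.1 * w.2 - z.2 * w.1 ≠ 0) :
    LinearIndependent ℝ ![z, w] := by
  rw [LinearIndependent.pair_iff]
  intro s t hst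
  have h1 := congrArg Prod.fst hst
  have h2 := congrArg Prod.snd hst
  simp at h1 h2
  constructor
  · refine (mul_eq_zero.1 (?_ : s * (z.1 * w.2 - z.2 * w.1) = 0)).resolve_right h
    linear_combination w.2 * h1 - w.1 * h2
  · refine (mul_eq_zero.1 (?_ : t * (z.1 * w.2 - z.2 * w.1) = 0)).resolve_right h
    linear_combination z.1 * h2 - z.2 * h1

lemma extreme_of_two {q : ℝ} (hq : 2 < q) {T : Matrix (Fin 2) (Fin 2) ℝ}
    (hT : T ∈ unitBall 2 q) {z w : ℝ × ℝ} (hzw : LinearIndependent ℝ ![z, w])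
    (hz : pnorm q (app T z) = pnorm 2 z) (hw : pnorm q (app T w) = pnorm 2 w) :
    T ∈ Set.extremePoints ℝ (unitBall 2 q) := by
  rw [pnorm_eq_iff hq] at hz hw
  refine mem_extremePoints_iff_left.2 ⟨hT, ?_⟩
  rintro A hA B hB ⟨a, b, ha, hb, hab, h⟩
  exact matrix_ext_of_app (det_ne_zero_of_linearIndependent hzw)
    (attained_of_segment hq ha hb hab h hA hB hz).1 (attained_of_segment hq ha hb hab h hA hB hw).1

/-- The value of `s` in the explicit form is the one that makes the second-order inequality an
equality. -/
lemma critical_sq {q : ℝ} (hq : 2 < q) {y₁ y₂ : ℝ} (h1 : |y₁| ^ q = 1 / 2) (h2 : |y₂| ^ q = 1 / 2) :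
    (q - 1) * (((2 : ℝ) ^ ((q - 2) / q) / Real.sqrt (q - 1)) ^ 2 * (|y₁| * |y₂|) ^ (q - 2)) = 1 := by
  have hq0 : q ≠ 0 := by linarith
  have e : ∀ y : ℝ, |y| ^ q = 1 / 2 → |y| ^ (q - 2) = ((2 : ℝ) ^ ((q - 2) / q))⁻¹ := by
    intro y hy
    rw [← Real.inv_rpow (by norm_num), inv_eq_one_div, ← hy, ← Real.rpow_mul (abs_nonneg _)]
    congr 1; field_simp
  rw [Real.mul_rpow (abs_nonneg _) (abs_nonneg _), e _ h1, e _ h2, div_pow,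
    Real.sq_sqrt (by linarith)]
  have : q - 1 ≠ 0 := by linarith
  have : (2 : ℝ) ^ ((q - 2) / q) ≠ 0 := by positivity
  field_simp

lemma extreme_of_form {q : ℝ} (hq : 2 < q) {T : Matrix (Fin 2) (Fin 2) ℝ}
    (hT : T ∈ unitBall 2 q) {x y : ℝ × ℝ} {s : ℝ} (hx : x.1 ^ 2 + x.2 ^ 2 = 1)
    (hy1 : |y.1| ^ q = 1 / 2) (hy2 : |y.2| ^ q = 1 / 2)
    (hs : (q - 1) * (s ^ 2 * (|y.1| * |y.2|) ^ (q - 2)) = 1)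
    (h : T = tensor x y + s • tensor (rot x) (spow (rot y) (q - 1))) :
    T ∈ Set.extremePoints ℝ (unitBall 2 q) := by
  have hTx : app T x = y := by rw [h]; exact app_form_x hx _ _ _
  have hTr := app_form_rot hx y (spow (rot y) (q - 1)) s
  rw [← h, spow_rot hq] at hTr
  have hy : |y.1| ^ q + |y.2| ^ q = 1 := by linarith
  have hz : |(app T x).1| ^ q + |(app T x).2| ^ q = (x.1 ^ 2 + x.2 ^ 2) ^ (q / 2) := by
    rw [hTx, hx, hy, Real.one_rpow]
  refine mem_extremePoints_iff_left.2 ⟨hT, ?_⟩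
  rintro A hA B hB ⟨a, b, ha, hb, hab, hAB⟩
  obtain ⟨hAx, hBx⟩ := attained_of_segment hq ha hb hab hAB hA hB hz
  rw [hTx] at hAx hBx
  obtain ⟨α, hA1, hA2, hA3, -⟩ := contraction_struct hq hA hx (by rw [hAx]; exact hy)
  obtain ⟨β, hB1, hB2, hB3, -⟩ := contraction_struct hq hB hx (by rw [hBx]; exact hy)
  rw [hAx] at hA1 hA2 hA3
  rw [hBx] at hB1 hB2 hB3
  have hy0 : y.1 ≠ 0 := by
    intro h0; rw [h0, abs_zero, Real.zero_rpow (by linarith)] at hy1; norm_num at hy1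
  have hv : |y.1| ^ (q - 2) * y.1 ≠ 0 := by positivity
  have hM : 0 ≤ (|y.1| * |y.2|) ^ (q - 2) := by positivity
  set M := (|y.1| * |y.2|) ^ (q - 2)
  have hMpos : 0 < (q - 1) * M := by
    refine lt_of_le_of_ne (mul_nonneg (by linarith) hM) fun h0 => ?_
    have : s ^ 2 * ((q - 1) * M) = 1 := by linarith
    rw [← h0] at this; simp at this
  have hα : α ^ 2 ≤ s ^ 2 := by
    refine le_of_mul_le_mul_right ?_ hMpos; linarith
  have hβ : β ^ 2 ≤ s ^ 2 := by
    refine le_of_mul_le_mul_right ?_ hMpos; linarith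
  have hsum : a * α + b * β = s := by
    refine mul_right_cancel₀ hv ?_
    have e2 : (app T (rot x)).2 = a * (app A (rot x)).2 + b * (app B (rot x)).2 := by
      rw [← hAB]; simp [app]; ring
    rw [hA2, hB2, hTr] at e2
    simp only at e2
    linarith
  -- Strict convexity of the square: `s` is an average of numbers of modulus at most `|s|`.
  have hαβ : a * b * (α - β) ^ 2 ≤ 0 := by
    have : a * b * (α - β) ^ 2 = (a * α ^ 2 + b * β ^ 2) - s ^ 2 := by
      rw [← hsum, show b = 1 - a by linarith]; ring
    rw [this]
    have e1 := mul_le_mul_of_nonneg_left hα ha.le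
    have e2 := mul_le_mul_of_nonneg_left hβ hb.le
    have e3 : a * s ^ 2 + b * s ^ 2 = s ^ 2 := by rw [← add_mul, hab, one_mul]
    linarith
  have hαβ' : α = β := by
    by_contra hne
    have : 0 < (α - β) ^ 2 := by have := sub_ne_zero.2 hne; positivity
    exact absurd hαβ (not_le.2 (by positivity))
  rw [← hαβ', ← add_mul, hab, one_mul] at hsum
  refine matrix_ext_of_app (det_rot hx) (hAx.trans hTx.symm) ?_
  rw [hTr]
  exact Prod.ext (by rw [hA1, hsum]) (by rw [hA2, hsum])

/-! ### Perturbation in the non-critical case -/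

/-- If the second-order inequality is strict and the norm is attained only at `±x`, the coefficient
`α` may be moved a little in either direction without leaving the unit ball. -/
lemma exists_perturbation {q : ℝ} (hq : 2 < q) {x y : ℝ × ℝ} {α : ℝ}
    (hx : x.1 ^ 2 + x.2 ^ 2 = 1) (hy : |y.1| ^ q + |y.2| ^ q = 1)
    (hα : (q - 1) * (α ^ 2 * (|y.1| * |y.2|) ^ (q - 2)) < 1)
    (hstrict : ∀ a b : ℝ, a ^ 2 + b ^ 2 = 1 → b ≠ 0 →
      |a * y.1 + α * b * -(|y.2| ^ (q - 2) * y.2)| ^ q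
        + |a * y.2 + α * b * (|y.1| ^ (q - 2) * y.1)| ^ q < 1) :
    ∀ᶠ s in 𝓝 α, tensor x y + s • tensor (rot x) (spow (rot y) (q - 1)) ∈ unitBall 2 q := by
  have hloc := suff_main hq hy hα
  rw [spow_rot hq]
  set v₁ := -(|y.2| ^ (q - 2) * y.2)
  set v₂ := |y.1| ^ (q - 2) * y.1
  have key : ∀ᶠ s in 𝓝 α, ∀ p ∈ {z : ℝ × ℝ | z.1 ^ 2 + z.2 ^ 2 = 1},
      p.1 ^ 2 + p.2 ^ 2 = 1 → |p.1 * y.1 + s * p.2 * v₁| ^ q + |p.1 * y.2 + s * p.2 * v₂| ^ q ≤ 1 := by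
    refine isCompact_circle.eventually_forall_of_forall_eventually ?_
    rintro ⟨a, b⟩ hab
    simp only [Set.mem_ofPred_eq] at hab
    -- For `b = 0` the point is `±x`: divide by `c ≠ 0` and use the local bound at `t = d / c`.
    rcases eq_or_ne b 0 with rfl | hb
    · have ha : a ≠ 0 := by rintro rfl; simp at hab
      have ht : Tendsto (fun z : ℝ × ℝ × ℝ => (z.1, z.2.2 / z.2.1)) (𝓝 (α, a, 0)) (𝓝 (α, 0)) := by
        have : ContinuousAt (fun z : ℝ × ℝ × ℝ => (z.1, z.2.2 / z.2.1)) (α, a, 0) :=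
          continuousAt_fst.prodMk
            ((by fun_prop : ContinuousAt (fun z : ℝ × ℝ × ℝ => z.2.2) (α, a, 0)).div
              (by fun_prop : ContinuousAt (fun z : ℝ × ℝ × ℝ => z.2.1) (α, a, 0)) ha)
        simpa using this.tendsto
      have hn : ∀ᶠ z : ℝ × ℝ × ℝ in 𝓝 (α, a, 0), z.2.1 ≠ 0 :=
        (by fun_prop : ContinuousAt (fun z : ℝ × ℝ × ℝ => z.2.1) (α, a, 0)).eventually_ne ha
      filter_upwards [ht.eventually hloc, hn]
      rintro ⟨s, c, d⟩ h1 h2 hcd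
      simp only at h1 h2 hcd ⊢
      have e : ∀ u v : ℝ, |c * u + s * d * v| ^ q = |c| ^ q * |u + s * (d / c) * v| ^ q := by
        intro u v
        rw [← Real.mul_rpow (abs_nonneg _) (abs_nonneg _), ← abs_mul]
        congr 2; field_simp
      rw [e, e, ← mul_add]
      have e2 : (1 + (d / c) ^ 2) ^ (q / 2) = (|c| ^ q)⁻¹ := by
        have : 1 + (d / c) ^ 2 = (|c| ^ 2)⁻¹ := by
          rw [sq_abs]; field_simp; exact hcd
        rw [this, Real.inv_rpow (by positivity), ← Real.rpow_natCast, ← Real.rpow_mul (abs_nonneg _)]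
        congr 2; push_cast; ring
      rw [e2] at h1
      have hc : 0 < |c| ^ q := Real.rpow_pos_of_pos (abs_pos.2 h2) _
      calc _ ≤ |c| ^ q * (|c| ^ q)⁻¹ := by gcongr
        _ = 1 := mul_inv_cancel₀ hc.ne'
    · have hc : Continuous (fun z : ℝ × ℝ × ℝ =>
          |z.2.1 * y.1 + z.1 * z.2.2 * v₁| ^ q + |z.2.1 * y.2 + z.1 * z.2.2 * v₂| ^ q) := by
        have h0 : (0 : ℝ) ≤ q := by linarith
        exact (Continuous.rpow_const (by fun_prop) fun _ => Or.inr h0).add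
          (Continuous.rpow_const (by fun_prop) fun _ => Or.inr h0)
      filter_upwards [hc.continuousAt.eventually (gt_mem_nhds (hstrict a b hab hb))] with z hz _
      exact hz.le
  filter_upwards [key] with s hs
  rw [mem_unitBall hq]
  intro z hz
  have hab : (z.1 * x.1 + z.2 * x.2) ^ 2 + (z.2 * x.1 - z.1 * x.2) ^ 2 = 1 := by
    linear_combination (z.1 ^ 2 + z.2 ^ 2) * hx + hz
  have h := hs (z.1 * x.1 + z.2 * x.2, z.2 * x.1 - z.1 * x.2) hab hab
  have hf := app_form hx y (v₁, v₂) s (z.1 * x.1 + z.2 * x.2) (z.2 * x.1 - z.1 * x.2)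
  have e : ((z.1 * x.1 + z.2 * x.2) * x.1 + (z.2 * x.1 - z.1 * x.2) * (rot x).1,
      (z.1 * x.1 + z.2 * x.2) * x.2 + (z.2 * x.1 - z.1 * x.2) * (rot x).2) = z := by
    ext <;> simp only [rot]
    · linear_combination z.1 * hx
    · linear_combination z.2 * hx
  rw [e] at hf
  rw [hf]
  exact h

/-- Extreme contractions from ℓ²_2 to ℓ^q_2 for q > 2. -/
theorem stmt_2 (q : ℝ) (hq : 2 < q) (T : Matrix (Fin 2) (Fin 2) ℝ)
    (hT : opNorm 2 q T = 1) :
    T ∈ Set.extremePoints ℝ (unitBall 2 q) ↔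
      ((∃ z w : ℝ × ℝ, LinearIndependent ℝ ![z, w] ∧
          pnorm q (app T z) = pnorm 2 z ∧ pnorm q (app T w) = pnorm 2 w) ∨
       (∃ (x y : ℝ × ℝ) (s : ℝ), pnorm 2 x = 1 ∧
          |y.1| ^ q = 1 / 2 ∧ |y.2| ^ q = 1 / 2 ∧
          (s = (2 : ℝ) ^ ((q - 2) / q) / Real.sqrt (q - 1) ∨
           s = -((2 : ℝ) ^ ((q - 2) / q) / Real.sqrt (q - 1))) ∧
          T = tensor x y + s • tensor (rot x) (spow (rot y) (q - 1)))) := by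
  have hTb : T ∈ unitBall 2 q := hT.le
  constructor
  · intro hext
    by_contra hcon
    rw [not_or] at hcon
    obtain ⟨hna, hnb⟩ := hcon
    obtain ⟨x, hx, hTx⟩ := exists_attains hq hT
    obtain ⟨α, h1, h2, h3, h4⟩ := contraction_struct hq hTb hx hTx
    set y := app T x with hy
    have hform : ∀ s, s = α → T = tensor x y + s • tensor (rot x) (spow (rot y) (q - 1)) := by
      rintro s rfl
      refine matrix_ext_of_app (det_rot hx) ?_ ?_
      · rw [app_form_x hx]
      · rw [app_form_rot hx, spow_rot hq]
        exact Prod.ext h1 h2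
    rcases h3.eq_or_lt with heq | hlt
    · obtain ⟨hy1, hy2⟩ := h4 heq
      refine hnb ⟨x, y, α, (pnorm_two_eq_one x).2 hx, hy1, hy2, ?_, hform α rfl⟩
      refine sq_eq_sq_iff_eq_or_eq_neg.1 ?_
      have hc := critical_sq hq hy1 hy2
      have hne : (q - 1) * (|y.1| * |y.2|) ^ (q - 2) ≠ 0 := by
        intro h0
        have : α ^ 2 * ((q - 1) * (|y.1| * |y.2|) ^ (q - 2)) = 1 := by linarith
        rw [h0] at this; simp at this
      refine mul_right_cancel₀ hne ?_
      linear_combination heq - hc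
    · have hev := exists_perturbation hq (α := α) hx hTx hlt ?_
      · obtain ⟨e, he, hs⟩ := Metric.eventually_nhds_iff.1 hev
        have hp := hs (y := α + e / 2) (by rw [Real.dist_eq, add_sub_cancel_left, abs_of_pos] <;> linarith)
        have hm := hs (y := α - e / 2) (by
          rw [Real.dist_eq, abs_sub_comm, sub_sub_cancel, abs_of_pos] <;> linarith)
        have hTp := (mem_extremePoints_iff_left.1 hext).2 _ hp _ hm
          ⟨1 / 2, 1 / 2, by norm_num, by norm_num, by norm_num, by
            rw [hform α rfl]; module⟩
        have hr : app (tensor x y + (α + e / 2) • tensor (rot x) (spow (rot y) (q - 1))) (rot x)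
            = app (tensor x y + α • tensor (rot x) (spow (rot y) (q - 1))) (rot x) := by
          rw [hTp, ← hform α rfl]
        rw [app_form_rot hx, app_form_rot hx, spow_rot hq] at hr
        simp only [Prod.mk.injEq] at hr
        have z1 : |y.1| ^ (q - 2) * y.1 = 0 :=
          (mul_eq_zero.1 (by linarith [hr.2] : (e / 2) * (|y.1| ^ (q - 2) * y.1) = 0)).resolve_left
            (by linarith)
        have z2 : |y.2| ^ (q - 2) * y.2 = 0 :=
          (mul_eq_zero.1 (by linarith [hr.1] : (e / 2) * (|y.2| ^ (q - 2) * y.2) = 0)).resolve_left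
            (by linarith)
        have e1 := abs_rpow_sub_two_mul_sq hq y.1
        have e2 := abs_rpow_sub_two_mul_sq hq y.2
        rw [sq, ← mul_assoc, z1, zero_mul] at e1
        rw [sq, ← mul_assoc, z2, zero_mul] at e2
        rw [← e1, ← e2] at hTx
        norm_num at hTx
      · intro a b hab hb
        set z : ℝ × ℝ := (a * x.1 + b * (rot x).1, a * x.2 + b * (rot x).2) with hz
        have hzn : z.1 ^ 2 + z.2 ^ 2 = 1 := by
          simp only [hz, rot]; linear_combination (a ^ 2 + b ^ 2) * hx + hab
        have hTz := app_form hx y (spow (rot y) (q - 1)) α a b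
        rw [← hform α rfl, ← hz, spow_rot hq] at hTz
        have hle := (mem_unitBall hq T).1 hTb z hzn
        refine lt_of_le_of_ne (by rw [hTz] at hle; exact hle) fun heq => hna ⟨x, z, ?_, ?_, ?_⟩
        · refine linearIndependent_of_det_ne_zero ?_
          have : x.1 * z.2 - x.2 * z.1 = b := by
            simp only [hz, rot]; linear_combination b * hx
          rwa [this]
        · rw [(pnorm_two_eq_one x).2 hx, pnorm_eq_one hq]; exact hTx
        · rw [(pnorm_two_eq_one z).2 hzn, pnorm_eq_one hq, hTz]; exact heq
  · rintro (⟨z, w, hzw, hz, hw⟩ | ⟨x, y, s, hx, hy1, hy2, hs, h⟩)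
    · exact extreme_of_two hq hTb hzw hz hw
    · refine extreme_of_form hq hTb ((pnorm_two_eq_one x).1 hx) hy1 hy2 ?_ h
      rcases hs with rfl | rfl
      · exact critical_sq hq hy1 hy2
      · rw [neg_sq]
        exact critical_sq hq hy1 hy2
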